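/- arXiv:2408.11959 — 2 statements merged into one kernel-verified Lean document; each statement's English description precedes it below -/
import Mathlib

section
/- Let A ∈ ℝ^{N×N}, B ∈ ℝ^{N×m}, let W ∈ ℝ^{N×N} be symmetric positive definite, and let L ∈ ℝ^{m×N}. Then the 2×2 block matrix [[W, A W + B L], [W Aᵀ + Lᵀ Bᵀ, W]] is positive definite if and only if, with K := L W⁻¹, the matrix (A + B K)ᵀ W⁻¹ (A + B K) − W⁻¹ is negative definite. -/
/-!
With `F = A + B K` and `K = L W⁻¹`, the off-diagonal block `A W + B L` equals `F W`. By the Schur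
complement (`posDef_fromBlocks_iff_schur`) the block matrix is positive definite iff
`W - (F W)ᵀ W⁻¹ (F W)` is, and this is the congruence of `W⁻¹ - Fᵀ W⁻¹ F` by the invertible
matrix `W`.
-/

open Matrix Polynomial

noncomputable section

/-- A real symmetric matrix is negative definite iff its negation is positive definite. -/
def NegDef {ι : Type*} [Fintype ι] (M : Matrix ι ι ℝ) : Prop := (-M).PosDef

/-- Schur complement criterion for strict positivity: the semidefinite criterion is combined with
the fact that a positive semidefinite matrix is positive definite iff it is invertible. -/
theorem posDef_fromBlocks_iff_schur {n p : Type*} [Fintype n] [Fintype p] [DecidableEq n]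
    [DecidableEq p] {P : Matrix n n ℝ} (hP : P.PosDef) (X : Matrix n p ℝ) (D : Matrix p p ℝ) :
    (Matrix.fromBlocks P X Xᴴ D).PosDef ↔ (D - Xᴴ * P⁻¹ * X).PosDef := by
  have : Invertible P := hP.isUnit.invertible
  have hs := PosDef.fromBlocks₁₁ X D hP
  have hu : IsUnit (Matrix.fromBlocks P X Xᴴ D) ↔ IsUnit (D - Xᴴ * P⁻¹ * X) := by
    rw [isUnit_fromBlocks_iff_of_invertible₁₁, invOf_eq_nonsing_inv]
  constructor
  · intro h
    exact (hs.1 h.posSemidef).posDef_iff_isUnit.2 (hu.1 h.isUnit)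
  · intro h
    exact (hs.2 h.posSemidef).posDef_iff_isUnit.2 (hu.2 h.isUnit)

/-- The LMI `[[W, A W + B L], [W Aᵀ + Lᵀ Bᵀ, W]] ≻ 0` holds iff, with `K = L W⁻¹`,
the discrete-time Lyapunov inequality `(A + B K)ᵀ W⁻¹ (A + B K) - W⁻¹ ≺ 0` holds. -/
theorem lmi_iff_lyapunov
    (N m : ℕ)
    (A : Matrix (Fin N) (Fin N) ℝ) (B : Matrix (Fin N) (Fin m) ℝ)
    (W : Matrix (Fin N) (Fin N) ℝ) (hWsymm : Wᵀ = W) (hW : W.PosDef)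
    (L : Matrix (Fin m) (Fin N) ℝ) :
    (Matrix.fromBlocks W (A * W + B * L) (W * Aᵀ + Lᵀ * Bᵀ) W).PosDef ↔
      NegDef ((A + B * (L * W⁻¹))ᵀ * W⁻¹ * (A + B * (L * W⁻¹)) - W⁻¹) := by
  have hdet : IsUnit W.det := W.isUnit_iff_isUnit_det.1 hW.isUnit
  have hFW : A * W + B * L = (A + B * (L * W⁻¹)) * W := by
    rw [Matrix.add_mul, Matrix.mul_assoc B, Matrix.nonsing_inv_mul_cancel_right _ _ hdet]
  have hT : W * Aᵀ + Lᵀ * Bᵀ = (A * W + B * L)ᴴ := by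
    simp [conjTranspose_eq_transpose_of_trivial, hWsymm]
  rw [hT, hFW, posDef_fromBlocks_iff_schur hW, NegDef, neg_sub]
  generalize A + B * (L * W⁻¹) = F
  have hcongr : star W * (W⁻¹ - Fᵀ * W⁻¹ * F) * W = W - (F * W)ᴴ * W⁻¹ * (F * W) := by
    rw [star_eq_conjTranspose, conjTranspose_eq_transpose_of_trivial,
      conjTranspose_eq_transpose_of_trivial, Matrix.transpose_mul, hWsymm, Matrix.mul_sub,
      Matrix.mul_nonsing_inv _ hdet, Matrix.sub_mul, Matrix.one_mul]
    simp only [Matrix.mul_assoc]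
  rw [← hcongr, Matrix.IsUnit.posDef_star_left_conjugate_iff hW.isUnit]
end
end

section
/- Let n, q, m, p ∈ ℕ with n, q, m, p ≥ 1. Let A ∈ ℝ^{n×n}, B ∈ ℝ^{n×m}, C ∈ ℝ^{p×n}, and let H ∈ ℝ^{q×q}, G ∈ ℝ^{q×p}, E ∈ ℝ^{m×q}, D ∈ ℝ^{m×p}. Let 𝒲 = [[W₀, W₁], [W₁ᵀ, W₂]] and 𝒫 = [[P₀, P₁], [P₁ᵀ, P₂]] in ℝ^{(n+q)×(n+q)} be symmetric with 𝒫 = 𝒲⁻¹ and W₀, P₀ symmetric, and set 𝒱 := [[P₀, I_n], [P₁ᵀ, 0]], Φ := [[A + B D C, B E], [G C, H]]. Define L₀ := P₀ B D + P₁ G, L₁ := (P₀ (A + B D C) + P₁ G C) W₀ + (P₀ B E + P₁ H) W₁ᵀ, and L₂ := D C W₀ + E W₁ᵀ. Then 𝒱ᵀ Φ 𝒲 𝒱 = [[P₀ A + L₀ C, L₁], [A + B D C, A W₀ + B L₂]]. -/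
/-!
The first block column of `𝒲 𝒫 = I` gives `W₀ P₀ + W₁ P₁ᵀ = I` and `W₁ᵀ P₀ + W₂ P₁ᵀ = 0`, so
`𝒲 𝒱 = [[I, W₀], [0, W₁ᵀ]]`. Multiplying this on the left by `𝒱ᵀ Φ` and expanding blockwise
gives the claim.
-/

open Matrix

noncomputable section

/-- The off-diagonal block `𝒱ᵀ Φ 𝒲 𝒱` of the transformed Lyapunov LMI is linear in the
new variables `L₀`, `L₁`, `L₂` and `D`. -/
theorem congruence_transform_offdiagonal
    (n q m p : ℕ) (hn : 0 < n) (hq : 0 < q) (hm : 0 < m) (hp : 0 < p)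
    (A : Matrix (Fin n) (Fin n) ℝ) (B : Matrix (Fin n) (Fin m) ℝ)
    (C : Matrix (Fin p) (Fin n) ℝ)
    (H : Matrix (Fin q) (Fin q) ℝ) (G : Matrix (Fin q) (Fin p) ℝ)
    (E : Matrix (Fin m) (Fin q) ℝ) (D : Matrix (Fin m) (Fin p) ℝ)
    (W₀ P₀ : Matrix (Fin n) (Fin n) ℝ) (W₁ P₁ : Matrix (Fin n) (Fin q) ℝ)
    (W₂ P₂ : Matrix (Fin q) (Fin q) ℝ)
    (hW₀ : W₀ᵀ = W₀) (hP₀ : P₀ᵀ = P₀) (hW₂ : W₂ᵀ = W₂) (hP₂ : P₂ᵀ = P₂)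
    (hinv : Matrix.fromBlocks W₀ W₁ W₁ᵀ W₂ * Matrix.fromBlocks P₀ P₁ P₁ᵀ P₂ = 1) :
    let V : Matrix (Fin n ⊕ Fin q) (Fin n ⊕ Fin n) ℝ := Matrix.fromBlocks P₀ 1 P₁ᵀ 0
    let Φ : Matrix (Fin n ⊕ Fin q) (Fin n ⊕ Fin q) ℝ :=
      Matrix.fromBlocks (A + B * D * C) (B * E) (G * C) H
    let L₀ : Matrix (Fin n) (Fin p) ℝ := P₀ * B * D + P₁ * G
    let L₁ : Matrix (Fin n) (Fin n) ℝ :=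
      (P₀ * (A + B * D * C) + P₁ * G * C) * W₀ + (P₀ * B * E + P₁ * H) * W₁ᵀ
    let L₂ : Matrix (Fin m) (Fin n) ℝ := D * C * W₀ + E * W₁ᵀ
    Vᵀ * Φ * Matrix.fromBlocks W₀ W₁ W₁ᵀ W₂ * V =
      Matrix.fromBlocks (P₀ * A + L₀ * C) L₁ (A + B * D * C) (A * W₀ + B * L₂) := by
  intro V Φ L₀ L₁ L₂
  rw [fromBlocks_multiply, ← fromBlocks_one, fromBlocks_inj] at hinv
  obtain ⟨h₁, -, h₂, -⟩ := hinv
  have hWV : fromBlocks W₀ W₁ W₁ᵀ W₂ * V = fromBlocks 1 W₀ 0 W₁ᵀ := by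
    simp [V, fromBlocks_multiply, h₁, h₂]
  rw [Matrix.mul_assoc, hWV]
  simp only [V, Φ, L₀, L₁, L₂, fromBlocks_transpose, fromBlocks_multiply, hP₀,
    transpose_transpose, transpose_one, transpose_zero, Matrix.mul_one, Matrix.one_mul,
    Matrix.mul_zero, Matrix.zero_mul, add_zero, Matrix.mul_add, Matrix.add_mul, Matrix.mul_assoc,
    add_assoc]
end
end
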